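/- Let u be a Lyndon word and v, w nonempty words. If v ≫ u and w ≥ v in the lexicographic order, then w ≫ u. -/

import Mathlib

/-- A word `u` is a Lyndon word if it is nonempty and lexicographically smaller than
each of its proper nonempty suffixes. -/
def IsLyndon {X : Type*} [LinearOrder X] (u : List X) : Prop :=
  u ≠ [] ∧ ∀ v w : List X, v ≠ [] → w ≠ [] → u = v ++ w → List.Lex (· < ·) u w

/-- `ls` is a Lyndon factorization of `u`: all factors are Lyndon words, the factors are
(lexicographically) nonincreasing, and their concatenation is `u`. -/
def IsLyndonFactorization {X : Type*} [LinearOrder X] (ls : List (List X)) (u : List X) : Prop :=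
  (∀ l ∈ ls, IsLyndon l) ∧ ls.Chain' (fun a b => ¬ List.Lex (· < ·) a b) ∧ ls.flatten = u

/-- `v ≫ u` : the first Lyndon letter of the Lyndon decomposition of `v` is
lexicographically greater than `u`. -/
def MuchGt {X : Type*} [LinearOrder X] (v u : List X) : Prop :=
  ∃ (l : List X) (t : List (List X)),
    IsLyndonFactorization (l :: t) v ∧ List.Lex (· < ·) u l

/-- A strict lexicographic inequality comes from a proper prefix, or is decided at a letter and
then persists under arbitrary right extensions. -/
theorem List.exists_append_or_append_lt_append {X : Type*} [LinearOrder X] :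
    ∀ {a b : List X}, a < b → (∃ c, c ≠ [] ∧ b = a ++ c) ∨ ∀ x y, a ++ x < b ++ y
  | _, _, .nil => .inl ⟨_, List.cons_ne_nil _ _, rfl⟩
  | _, _, .rel h => .inr fun _ _ => .rel h
  | _, _, .cons h => by
    rcases List.exists_append_or_append_lt_append h with ⟨c, hc, rfl⟩ | h
    · exact .inl ⟨c, hc, rfl⟩
    · exact .inr fun x y => .cons (h x y)

theorem List.le_append_self {X : Type*} [LinearOrder X] (a : List X) : ∀ b, a ≤ a ++ b
  | [] => by simp
  | x :: b => by
    have h : a ++ [] < a ++ x :: b := List.Lex.append_left (· < ·) .nil a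
    exact (by simpa using h : a < a ++ x :: b).le

/-- The concatenation of two strictly increasing Lyndon words is a Lyndon word. -/
theorem IsLyndon.append {X : Type*} [LinearOrder X] {a b : List X} (ha : IsLyndon a)
    (hb : IsLyndon b) (hab : a < b) : IsLyndon (a ++ b) := by
  have hlt : a ++ b < b := by
    rcases List.exists_append_or_append_lt_append hab with ⟨c, hc, rfl⟩ | h
    · exact List.Lex.append_left (· < ·) (hb.2 a c ha.1 hc rfl) a
    · simpa using h b []
  refine ⟨by simp [ha.1], fun v w hv hw h => ?_⟩
  change a ++ b < w
  rcases List.append_eq_append_iff.1 h with ⟨c, rfl, rfl⟩ | ⟨c, rfl, rfl⟩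
  · rcases eq_or_ne c [] with rfl | hc
    · exact hlt
    · exact hlt.trans (hb.2 c w hc hw rfl)
  · rcases eq_or_ne c [] with rfl | hc
    · simpa using hlt
    · rcases List.exists_append_or_append_lt_append (ha.2 v c hv hc rfl) with ⟨d, _, hd⟩ | h
      · have hlen := congrArg List.length hd
        have := List.length_pos_of_ne_nil hv
        simp only [List.length_append] at hlen
        omega
      · exact h b b

theorem IsLyndonFactorization.exists_append {X : Type*} [LinearOrder X] :
    ∀ {ls : List (List X)} {a w : List X}, IsLyndon a → IsLyndonFactorization ls w →
      ∃ ms, IsLyndonFactorization ms (a ++ w)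
  | [], a, _, ha, ⟨_, _, hw⟩ => ⟨[a], by simpa using ha, .singleton a, by simp [← hw]⟩
  | l :: ls, a, _, ha, ⟨hl, hc, hw⟩ => by
    subst hw
    by_cases h : a < l
    · obtain ⟨ms, hms⟩ := IsLyndonFactorization.exists_append
        (ha.append (hl l (by simp)) h) (w := ls.flatten)
        ⟨fun m hm => hl m (List.mem_cons_of_mem _ hm), hc.tail, rfl⟩
      exact ⟨ms, by simpa using hms⟩
    · exact ⟨a :: l :: ls, by simpa using ⟨ha, by simpa using hl⟩,
        List.isChain_cons_cons.2 ⟨h, hc⟩, by simp⟩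

/-- Every word has a Lyndon factorization. -/
theorem exists_isLyndonFactorization {X : Type*} [LinearOrder X] :
    ∀ w : List X, ∃ ls, IsLyndonFactorization ls w
  | [] => ⟨[], by simp, .nil, rfl⟩
  | x :: w => by
    obtain ⟨ls, hls⟩ := exists_isLyndonFactorization w
    have hx : IsLyndon [x] := by
      refine ⟨by simp, fun v w hv hw h => ?_⟩
      have hlen := congrArg List.length h
      have := List.length_pos_of_ne_nil hv
      have := List.length_pos_of_ne_nil hw
      simp only [List.length_append, List.length_singleton] at hlen
      omega
    exact hls.exists_append hx

/-- A concatenation of words smaller than a Lyndon word `l` is smaller than every nonempty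
suffix of `l`. -/
theorem IsLyndon.flatten_lt_suffix {X : Type*} [LinearOrder X] {l : List X} (hl : IsLyndon l) :
    ∀ {ms : List (List X)} {p s : List X}, (∀ m ∈ ms, m < l) → s ≠ [] → l = p ++ s →
      ms.flatten < s
  | [], _, s, _, hs, _ => by
    obtain ⟨x, s, rfl⟩ := List.exists_cons_of_ne_nil hs
    exact .nil
  | m :: ms, p, s, hm, hs, h => by
    have hls : l ≤ s := by
      rcases eq_or_ne p [] with rfl | hp
      · exact h.le
      · exact le_of_lt (hl.2 p s hp hs h)
    rcases List.exists_append_or_append_lt_append ((hm m (by simp)).trans_le hls) with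
      ⟨c, hc, rfl⟩ | hlt
    · exact List.Lex.append_left (· < ·)
        (hl.flatten_lt_suffix (p := p ++ m) (fun k hk => hm k (by simp [hk])) hc
          (by simpa using h)) m
    · simpa using hlt ms.flatten []

/-- The first factor of a Lyndon factorization is the largest one. -/
theorem IsLyndonFactorization.le_head {X : Type*} [LinearOrder X] {m w : List X}
    {ms : List (List X)} (h : IsLyndonFactorization (m :: ms) w) : ∀ k ∈ m :: ms, k ≤ m := by
  have hc : (m :: ms).IsChain (· ≥ ·) := h.2.1.imp fun _ _ hab => not_lt.1 hab
  intro k hk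
  rcases List.mem_cons.1 hk with rfl | hk
  · exact le_rfl
  · exact List.rel_of_pairwise_cons hc.pairwise hk

/-- If `u` is a Lyndon word, `v, w` are nonempty words, `v ≫ u` and `w ≥ v`
lexicographically, then `w ≫ u`. -/
theorem muchGt_of_le {X : Type*} [Fintype X] [LinearOrder X]
    (u v w : List X) (hu : IsLyndon u) (hv : v ≠ []) (hw : w ≠ [])
    (hvu : MuchGt v u) (hle : w = v ∨ List.Lex (· < ·) v w) :
    MuchGt w u := by
  obtain ⟨l, t, ⟨hl, _, rfl⟩, hul⟩ := hvu
  obtain ⟨ms, hms⟩ := exists_isLyndonFactorization w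
  cases ms with
  | nil => exact absurd hms.2.2.symm hw
  | cons m ms =>
    refine ⟨m, ms, hms, ?_⟩
    change u < m
    by_contra hum
    have hwl : w < l := hms.2.2 ▸ (hl l (by simp)).flatten_lt_suffix (p := [])
      (fun k hk => ((hms.le_head k hk).trans (not_lt.1 hum)).trans_lt hul)
      (hl l (by simp)).1 rfl
    have hlw : l ≤ w := (List.le_append_self l t.flatten).trans
      (hle.elim (fun h => h.ge) fun h => le_of_lt h)
    exact hlw.not_gt hwl
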